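/- arXiv:2007.10789 — 4 statements merged into one kernel-verified Lean document; each statement's English description precedes it below -/
import Mathlib

section
/- Let d > 0. There exists a constant C ≥ 1 such that for every v₀ ∈ W^{1,1}_1(ℝ,ℂ), every t ≥ 0, and all j, m ∈ {0,1}: ∫_ℝ |k^j ∂_k^m (e^{−d k² t} v₀(k))| dk ≤ C ‖v₀‖_{W^{1,1}_1} (1+t)^{−(1+j−m)/2}, where for m = 1 the derivative ∂_k(e^{−dk²t}v₀(k)) = −2dkt e^{−dk²t} v₀(k) + e^{−dk²t} ∂_k v₀(k) is taken in the weak sense. -/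
open MeasureTheory Real

noncomputable section

/-- `v'` is the weak derivative of `v : ℝ → ℂ`. -/
def HasWeakDeriv (v v' : ℝ → ℂ) : Prop :=
  LocallyIntegrable v volume ∧ LocallyIntegrable v' volume ∧
    ∀ φ : ℝ → ℝ, ContDiff ℝ (⊤ : ℕ∞) φ → HasCompactSupport φ →
      ∫ k, Complex.ofReal (deriv φ k) * v k = -∫ k, Complex.ofReal (φ k) * v' k

/-!
Mollification gives the embedding `‖v‖_∞ ≤ ‖v'‖_{L¹}`: for a smooth bump `ρ` of mass one,
`(ρ ⋆ v)' = ρ ⋆ v'` in the classical sense, so `|ρ ⋆ v| ≤ ‖ρ ⋆ v'‖_{L¹} ≤ ‖v'‖_{L¹}`.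

Put `a = dt` and let `s ∈ [0, 1]` be the decay rate. Since `(1 + a)^s ≤ 1 + a^s`, small and large
times need not be separated: it suffices to bound the integrand and `a^s` times the integrand.
The factors containing `a^s` are either at most `1`, because `x^q e^{-x} ≤ 1` for `q ∈ [0, 1]`, or
one of the weights `a^{(r+1)/2} |k|^r e^{-ak²}`, whose integral `Γ((r+1)/2) ≤ √π` does not depend
on `a`; the latter are paired with the supremum bound on `v`. Finally
`1 + t ≤ (1 + 1/d)(1 + dt)` converts the decay in `dt` into decay in `t`.
-/

section WeakDerivative

open Filter Topology ContinuousLinearMap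
open scoped Convolution

theorem integral_norm_convolution_le {𝕜 G E E' F : Type*} [NontriviallyNormedField 𝕜]
    [NormedAddCommGroup E] [NormedSpace 𝕜 E] [NormedAddCommGroup E'] [NormedSpace 𝕜 E']
    [NormedAddCommGroup F] [NormedSpace 𝕜 F] [NormedSpace ℝ F]
    [MeasurableSpace G] {μ : Measure G} [AddGroup G] [MeasurableAdd₂ G] [MeasurableNeg G]
    [SFinite μ] [μ.IsAddRightInvariant] {f : G → E} {g : G → E'} (L : E →L[𝕜] E' →L[𝕜] F)
    (hf : Integrable f μ) (hg : Integrable g μ) :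
    ∫ x, ‖(f ⋆[L, μ] g) x‖ ∂μ ≤ ‖L‖ * ((∫ x, ‖f x‖ ∂μ) * ∫ x, ‖g x‖ ∂μ) := by
  calc ∫ x, ‖(f ⋆[L, μ] g) x‖ ∂μ
      ≤ ∫ x, ‖L‖ * ((fun y => ‖f y‖) ⋆[mul ℝ ℝ, μ] fun y => ‖g y‖) x ∂μ := by
        refine integral_mono_of_nonneg (.of_forall fun x => norm_nonneg _)
          ((hf.norm.integrable_convolution _ hg.norm).const_mul _) ?_
        filter_upwards [hf.norm.ae_convolution_exists (mul ℝ ℝ) hg.norm] with x hx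
        rw [convolution_mul, ← integral_const_mul]
        refine norm_integral_le_of_norm_le (hx.const_mul _) (.of_forall fun y => ?_)
        rw [← mul_assoc]
        exact L.le_opNorm₂ _ _
    _ = ‖L‖ * ((∫ x, ‖f x‖ ∂μ) * ∫ x, ‖g x‖ ∂μ) := by
        rw [integral_const_mul, integral_convolution _ hf.norm hg.norm, mul_apply']

theorem norm_le_integral_norm_of_hasDerivAt {E : Type*} [NormedAddCommGroup E] [NormedSpace ℝ E]
    [CompleteSpace E] {u u' : ℝ → E} (hderiv : ∀ x, HasDerivAt u (u' x) x) (hu : Integrable u)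
    (hu' : Integrable u') (x : ℝ) : ‖u x‖ ≤ ∫ y, ‖u' y‖ := by
  have hlim : Tendsto u atBot (𝓝 0) :=
    tendsto_zero_of_hasDerivAt_of_integrableOn_Iic (a := x) (fun y _ => hderiv y)
      hu'.integrableOn hu.integrableOn
  have hftc : ∫ y in Set.Iic x, u' y = u x := by
    rw [integral_Iic_of_hasDerivAt_of_tendsto' (fun y _ => hderiv y) hu'.integrableOn hlim,
      sub_zero]
  calc ‖u x‖ = ‖∫ y in Set.Iic x, u' y‖ := by rw [hftc]
    _ ≤ ∫ y in Set.Iic x, ‖u' y‖ := norm_integral_le_integral_norm _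
    _ ≤ ∫ y, ‖u' y‖ := setIntegral_le_integral hu'.norm (.of_forall fun y => norm_nonneg _)

theorem HasWeakDeriv.hasDerivAt_convolution {v v' : ℝ → ℂ} (hv : HasWeakDeriv v v')
    {ρ : ℝ → ℝ} (hρ : ContDiff ℝ (⊤ : ℕ∞) ρ) (hρc : HasCompactSupport ρ) (x : ℝ) :
    HasDerivAt (ρ ⋆[lsmul ℝ ℝ] v) ((ρ ⋆[lsmul ℝ ℝ] v') x) x := by
  have hderiv := hρc.hasDerivAt_convolution_left (lsmul ℝ ℝ) (hρ.of_le (mod_cast le_top)) hv.1 x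
  have htest := hv.2.2 (fun y => ρ (x - y)) (hρ.comp (contDiff_const.sub contDiff_id))
    (hρc.comp_homeomorph (Homeomorph.subLeft x))
  simp only [deriv_comp_const_sub, Complex.ofReal_neg, neg_mul, integral_neg, neg_inj] at htest
  have hswap : (deriv ρ ⋆[lsmul ℝ ℝ] v) x = (ρ ⋆[lsmul ℝ ℝ] v') x := by
    simpa only [convolution_lsmul_swap, Complex.real_smul] using htest
  rwa [hswap] at hderiv

theorem HasWeakDeriv.norm_convolution_le {v v' : ℝ → ℂ} (hw : HasWeakDeriv v v')
    (hv : Integrable v) (hv' : Integrable v') {ρ : ℝ → ℝ} (hρ : ContDiff ℝ (⊤ : ℕ∞) ρ)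
    (hρc : HasCompactSupport ρ) (x : ℝ) :
    ‖(ρ ⋆[lsmul ℝ ℝ] v) x‖ ≤ (∫ y, ‖ρ y‖) * ∫ y, ‖v' y‖ := by
  have hρi : Integrable ρ := hρ.continuous.integrable_of_hasCompactSupport hρc
  calc ‖(ρ ⋆[lsmul ℝ ℝ] v) x‖ ≤ ∫ y, ‖(ρ ⋆[lsmul ℝ ℝ] v') y‖ :=
        norm_le_integral_norm_of_hasDerivAt (hw.hasDerivAt_convolution hρ hρc)
          (hρi.integrable_convolution _ hv) (hρi.integrable_convolution _ hv') x
    _ ≤ ‖(lsmul ℝ ℝ : ℝ →L[ℝ] ℂ →L[ℝ] ℂ)‖ * ((∫ y, ‖ρ y‖) * ∫ y, ‖v' y‖) :=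
        integral_norm_convolution_le _ hρi hv'
    _ ≤ (∫ y, ‖ρ y‖) * ∫ y, ‖v' y‖ :=
        mul_le_of_le_one_left (by positivity) opNorm_lsmul_le

theorem HasWeakDeriv.ae_norm_le_integral_norm {v v' : ℝ → ℂ} (hw : HasWeakDeriv v v')
    (hv : Integrable v) (hv' : Integrable v') : ∀ᵐ x, ‖v x‖ ≤ ∫ y, ‖v' y‖ := by
  let β (n : ℕ) : ContDiffBump (0 : ℝ) :=
    ⟨1 / ((n : ℝ) + 1), 2 * (1 / ((n : ℝ) + 1)), by positivity, lt_two_mul_self (by positivity)⟩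
  have hβ : Tendsto (fun n => (β n).rOut) atTop (𝓝 0) := by
    simpa [β] using (tendsto_one_div_add_atTop_nhds_zero_nat (𝕜 := ℝ)).const_mul 2
  have hmass (n : ℕ) : ∫ y, ‖(β n).normed volume y‖ = 1 := by
    simp only [norm_of_nonneg ((β n).nonneg_normed _), (β n).integral_normed]
  filter_upwards [ContDiffBump.ae_convolution_tendsto_right_of_locallyIntegrable (μ := volume)
    (K := 2) hβ (.of_forall fun n => le_rfl) hw.1] with x hx
  refine le_of_tendsto hx.norm (.of_forall fun n => ?_)
  simpa only [hmass, one_mul] using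
    hw.norm_convolution_le hv hv' (ρ := (β n).normed volume) (β n).contDiff_normed
      (β n).hasCompactSupport_normed x

end WeakDerivative

section GaussianWeight

theorem integrable_abs_rpow_mul_exp_neg_mul_sq {a r : ℝ} (ha : 0 < a) (hr : -1 < r) :
    Integrable fun k : ℝ => |k| ^ r * exp (-a * k ^ 2) := by
  have h := (integrable_fun_norm_addHaar (μ := (volume : Measure ℝ))
    (f := fun x : ℝ => x ^ r * exp (-a * x ^ 2))).2
      (by simpa using integrableOn_rpow_mul_exp_neg_mul_sq ha hr)
  simpa only [norm_eq_abs, sq_abs] using h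

theorem integral_abs_rpow_mul_exp_neg_mul_sq {a r : ℝ} (ha : 0 < a) (hr : -1 < r) :
    ∫ k : ℝ, |k| ^ r * exp (-a * k ^ 2) = a ^ (-(r + 1) / 2) * Gamma ((r + 1) / 2) := by
  have heven := integral_comp_abs (f := fun x => x ^ r * exp (-a * x ^ 2))
  have hhalf := integral_rpow_mul_exp_neg_mul_rpow two_pos hr ha
  simp only [rpow_two] at hhalf
  simp only [sq_abs] at heven
  rw [heven, hhalf]
  ring

/-- The weight `|k|^r e^{-ak²}` rescaled by `a^{(r+1)/2}`, which makes its integral over `ℝ`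
independent of `a > 0`. -/
def gaussianWeight (r a k : ℝ) : ℝ := a ^ ((r + 1) / 2) * (|k| ^ r * exp (-a * k ^ 2))

variable {a r : ℝ}

theorem gaussianWeight_zero (hr : -1 < r) : gaussianWeight r 0 = 0 := by
  ext k
  rw [gaussianWeight, zero_rpow (by linarith), zero_mul, Pi.zero_apply]

theorem gaussianWeight_nonneg (ha : 0 ≤ a) (k : ℝ) : 0 ≤ gaussianWeight r a k := by
  unfold gaussianWeight
  positivity

theorem integrable_gaussianWeight (ha : 0 ≤ a) (hr : -1 < r) :
    Integrable (gaussianWeight r a) := by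
  rcases ha.eq_or_lt with rfl | ha
  · rw [gaussianWeight_zero hr]
    exact integrable_zero _ _ _
  · exact (integrable_abs_rpow_mul_exp_neg_mul_sq ha hr).const_mul _

theorem integral_gaussianWeight_le (ha : 0 ≤ a) (hr : -1 < r) :
    ∫ k, gaussianWeight r a k ≤ Gamma ((r + 1) / 2) := by
  rcases ha.eq_or_lt with rfl | ha
  · simpa [gaussianWeight_zero hr] using Gamma_nonneg_of_nonneg (by linarith)
  · simp only [gaussianWeight]
    rw [integral_const_mul, integral_abs_rpow_mul_exp_neg_mul_sq ha hr, ← mul_assoc,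
      ← rpow_add ha, neg_div, add_neg_cancel, rpow_zero, one_mul]

theorem Gamma_le_sqrt_pi {x : ℝ} (hx : x ∈ Set.Icc (1 / 2) (3 / 2)) : Gamma x ≤ √π := by
  have hright : Gamma (3 / 2) ≤ √π := by
    rw [show (3 / 2 : ℝ) = 1 / 2 + 1 by norm_num, Gamma_add_one (by norm_num),
      Gamma_one_half_eq]
    linarith [sqrt_nonneg π]
  exact (convexOn_Gamma.le_max_of_mem_Icc (Set.mem_Ioi.2 (by norm_num))
    (Set.mem_Ioi.2 (by norm_num)) hx).trans (max_le Gamma_one_half_eq.le hright)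

theorem integral_gaussianWeight_le_sqrt_pi (ha : 0 ≤ a) (hr0 : 0 ≤ r) (hr2 : r ≤ 2) :
    ∫ k, gaussianWeight r a k ≤ √π :=
  (integral_gaussianWeight_le ha (by linarith)).trans
    (Gamma_le_sqrt_pi ⟨by linarith, by linarith⟩)

end GaussianWeight

section Pointwise

theorem rpow_le_one_add {x r : ℝ} (hx : 0 ≤ x) (hr0 : 0 ≤ r) (hr1 : r ≤ 1) : x ^ r ≤ 1 + x := by
  calc x ^ r ≤ (1 + x) ^ r := by gcongr; linarith
    _ ≤ 1 + x := rpow_le_self_of_one_le (by linarith) hr1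

theorem rpow_mul_exp_neg_le_one {x r : ℝ} (hx : 0 ≤ x) (hr0 : 0 ≤ r) (hr1 : r ≤ 1) :
    x ^ r * exp (-x) ≤ 1 := by
  rw [exp_neg]
  refine mul_inv_le_one_of_le₀ ?_ (exp_nonneg x)
  linarith [rpow_le_one_add hx hr0 hr1, add_one_le_exp x]

theorem one_add_rpow_mul_le_add {a s x A B : ℝ} (ha : 0 ≤ a) (hs0 : 0 ≤ s) (hs1 : s ≤ 1)
    (hx : 0 ≤ x) (hA : x ≤ A) (hB : a ^ s * x ≤ B) : (1 + a) ^ s * x ≤ A + B := by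
  calc (1 + a) ^ s * x ≤ (1 ^ s + a ^ s) * x := by
        gcongr
        exact rpow_add_le_add_rpow zero_le_one ha hs0 hs1
    _ = x + a ^ s * x := by rw [one_rpow, add_mul, one_mul]
    _ ≤ A + B := add_le_add hA hB

variable {a j : ℝ}

theorem abs_rpow_mul_gaussian_le (ha : 0 ≤ a) (hj0 : 0 ≤ j) (hj1 : j ≤ 1) (k : ℝ) :
    |k| ^ j * exp (-a * k ^ 2) ≤ 1 + |k| := by
  have hexp : exp (-a * k ^ 2) ≤ 1 := exp_le_one_iff.2 (by rw [neg_mul, neg_nonpos]; positivity)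
  calc |k| ^ j * exp (-a * k ^ 2) ≤ |k| ^ j := mul_le_of_le_one_right (by positivity) hexp
    _ ≤ 1 + |k| := rpow_le_one_add (abs_nonneg k) hj0 hj1

theorem rpow_half_mul_abs_rpow_mul_gaussian_le_one (ha : 0 ≤ a) (hj0 : 0 ≤ j) (hj2 : j ≤ 2)
    (k : ℝ) : a ^ (j / 2) * (|k| ^ j * exp (-a * k ^ 2)) ≤ 1 := by
  have hpow : a ^ (j / 2) * |k| ^ j = (a * k ^ 2) ^ (j / 2) := by
    rw [mul_rpow ha (sq_nonneg k), ← sq_abs k, ← rpow_two, ← rpow_mul (abs_nonneg k),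
      mul_div_cancel₀ j two_ne_zero]
  rw [← mul_assoc, hpow, neg_mul]
  exact rpow_mul_exp_neg_le_one (by positivity) (by linarith) (by linarith)

theorem abs_rpow_mul_gaussian_deriv_le (ha : 0 ≤ a) (hj0 : 0 ≤ j) (hj1 : j ≤ 1) (k : ℝ) :
    |k| ^ j * (a * |k| * exp (-a * k ^ 2)) ≤ gaussianWeight 1 a k + 1 := by
  have hsq : a * k ^ 2 * exp (-(a * k ^ 2)) ≤ 1 := by
    simpa only [rpow_one] using
      rpow_mul_exp_neg_le_one (x := a * k ^ 2) (by positivity) zero_le_one le_rfl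
  calc |k| ^ j * (a * |k| * exp (-a * k ^ 2))
      ≤ (1 + |k|) * (a * |k| * exp (-a * k ^ 2)) := by
        gcongr
        exact rpow_le_one_add (abs_nonneg k) hj0 hj1
    _ = gaussianWeight 1 a k + a * k ^ 2 * exp (-(a * k ^ 2)) := by
        rw [gaussianWeight, add_self_div_two, rpow_one, rpow_one, neg_mul, ← sq_abs k]
        ring
    _ ≤ gaussianWeight 1 a k + 1 := by gcongr

theorem rpow_half_mul_abs_rpow_mul_gaussian_deriv (ha : 0 ≤ a) (hj0 : 0 ≤ j) (k : ℝ) :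
    a ^ (j / 2) * (|k| ^ j * (a * |k| * exp (-a * k ^ 2))) = gaussianWeight (j + 1) a k := by
  rw [gaussianWeight, rpow_add_of_nonneg (abs_nonneg k) hj0 zero_le_one, rpow_one,
    show (j + 1 + 1) / 2 = j / 2 + 1 by ring,
    rpow_add_of_nonneg ha (by linarith) zero_le_one, rpow_one]
  ring

theorem one_add_rpow_mul_gaussian_le_weight (ha : 0 ≤ a) (hj0 : 0 ≤ j) (hj1 : j ≤ 1) (k : ℝ) :
    (1 + a) ^ ((j + 1) / 2) * (|k| ^ j * exp (-a * k ^ 2)) ≤ 1 + |k| + gaussianWeight j a k :=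
  one_add_rpow_mul_le_add ha (by linarith) (by linarith) (by positivity)
    (abs_rpow_mul_gaussian_le ha hj0 hj1 k) le_rfl

theorem one_add_rpow_half_mul_gaussian_le (ha : 0 ≤ a) (hj0 : 0 ≤ j) (hj1 : j ≤ 1) (k : ℝ) :
    (1 + a) ^ (j / 2) * (|k| ^ j * exp (-a * k ^ 2)) ≤ 1 + |k| + 1 :=
  one_add_rpow_mul_le_add ha (by linarith) (by linarith) (by positivity)
    (abs_rpow_mul_gaussian_le ha hj0 hj1 k)
    (rpow_half_mul_abs_rpow_mul_gaussian_le_one ha hj0 (by linarith) k)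

theorem one_add_rpow_half_mul_gaussian_deriv_le_weight (ha : 0 ≤ a) (hj0 : 0 ≤ j) (hj1 : j ≤ 1)
    (k : ℝ) :
    (1 + a) ^ (j / 2) * (|k| ^ j * (a * |k| * exp (-a * k ^ 2))) ≤
      gaussianWeight 1 a k + 1 + gaussianWeight (j + 1) a k :=
  one_add_rpow_mul_le_add ha (by linarith) (by linarith) (by positivity)
    (abs_rpow_mul_gaussian_deriv_le ha hj0 hj1 k)
    (rpow_half_mul_abs_rpow_mul_gaussian_deriv ha hj0 k).le

end Pointwise

section HeatSemigroup

theorem norm_le_one_add_abs_mul_norm {E : Type*} [SeminormedAddCommGroup E] (k : ℝ) (z : E) :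
    ‖z‖ ≤ (1 + |k|) * ‖z‖ :=
  le_mul_of_one_le_left (norm_nonneg z) (le_add_of_nonneg_right (abs_nonneg k))

theorem norm_heat_eq (d t k : ℝ) (z : ℂ) :
    ‖Complex.ofReal (exp (-(d * k ^ 2 * t))) * z‖ = exp (-(d * t) * k ^ 2) * ‖z‖ := by
  rw [norm_mul, Complex.norm_real, norm_eq_abs, abs_exp]
  ring_nf

theorem norm_heat_deriv_le {d t : ℝ} (hdt : 0 ≤ d * t) (k : ℝ) (z z' : ℂ) :
    ‖Complex.ofReal (-(2 * d * k * t)) * Complex.ofReal (exp (-(d * k ^ 2 * t))) * z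
        + Complex.ofReal (exp (-(d * k ^ 2 * t))) * z'‖ ≤
      2 * (d * t * |k| * exp (-(d * t) * k ^ 2) * ‖z‖) + exp (-(d * t) * k ^ 2) * ‖z'‖ := by
  have hcoeff : |(-(2 * d * k * t))| = 2 * (d * t * |k|) := by
    rw [abs_neg, show 2 * d * k * t = 2 * (d * t * k) by ring, abs_mul, abs_two, abs_mul,
      abs_of_nonneg hdt]
  refine (norm_add_le _ _).trans_eq ?_
  rw [mul_assoc, norm_mul, norm_heat_eq, norm_heat_eq, Complex.norm_real, norm_eq_abs, hcoeff]
  ring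

theorem one_add_rpow_mul_norm_heat_le {d t j k M : ℝ} {z : ℂ} (hdt : 0 ≤ d * t) (hj0 : 0 ≤ j)
    (hj1 : j ≤ 1) (hz : ‖z‖ ≤ M) :
    (1 + d * t) ^ ((j + 1) / 2) *
        (|k| ^ j * ‖Complex.ofReal (exp (-(d * k ^ 2 * t))) * z‖) ≤
      M * gaussianWeight j (d * t) k + (1 + |k|) * ‖z‖ := by
  have hkernel := one_add_rpow_mul_gaussian_le_weight hdt hj0 hj1 k
  have hweight := mul_le_mul_of_nonneg_right hz (gaussianWeight_nonneg (r := j) hdt k)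
  rw [norm_heat_eq]
  linarith [mul_le_mul_of_nonneg_right hkernel (norm_nonneg z)]

theorem one_add_rpow_half_mul_norm_heat_deriv_le {d t j k M : ℝ} {z z' : ℂ} (hdt : 0 ≤ d * t)
    (hj0 : 0 ≤ j) (hj1 : j ≤ 1) (hz : ‖z‖ ≤ M) :
    (1 + d * t) ^ (j / 2) * (|k| ^ j *
        ‖Complex.ofReal (-(2 * d * k * t)) * Complex.ofReal (exp (-(d * k ^ 2 * t))) * z
          + Complex.ofReal (exp (-(d * k ^ 2 * t))) * z'‖) ≤
      2 * (M * (gaussianWeight 1 (d * t) k + gaussianWeight (j + 1) (d * t) k)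
        + ((1 + |k|) * ‖z‖ + (1 + |k|) * ‖z'‖)) := by
  have hnorm := mul_le_mul_of_nonneg_left (norm_heat_deriv_le hdt k z z')
    (by positivity : 0 ≤ (1 + d * t) ^ (j / 2) * |k| ^ j)
  have hvalue := mul_le_mul_of_nonneg_right
    (one_add_rpow_half_mul_gaussian_deriv_le_weight hdt hj0 hj1 k) (norm_nonneg z)
  have hderiv := mul_le_mul_of_nonneg_right
    (one_add_rpow_half_mul_gaussian_le hdt hj0 hj1 k) (norm_nonneg z')
  have hweight := mul_le_mul_of_nonneg_right hz
    (add_nonneg (gaussianWeight_nonneg (r := 1) hdt k) (gaussianWeight_nonneg (r := j + 1) hdt k))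
  linarith [norm_le_one_add_abs_mul_norm k z, norm_le_one_add_abs_mul_norm k z']

variable {d t j M : ℝ} {v v' : ℝ → ℂ}

theorem one_add_rpow_mul_integral_heat_le (hdt : 0 ≤ d * t) (hj0 : 0 ≤ j) (hj1 : j ≤ 1)
    (hvM : ∀ᵐ k, ‖v k‖ ≤ M) (hv : Integrable fun k => (1 + |k|) * ‖v k‖) :
    (1 + d * t) ^ ((j + 1) / 2) *
        ∫ k : ℝ, |k| ^ j * ‖Complex.ofReal (exp (-(d * k ^ 2 * t))) * v k‖ ≤
      √π * M + ∫ k : ℝ, (1 + |k|) * ‖v k‖ := by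
  obtain ⟨_, hM⟩ := hvM.exists
  replace hM : 0 ≤ M := (norm_nonneg _).trans hM
  have hW := (integrable_gaussianWeight hdt (by linarith : -1 < j)).const_mul M
  rw [← integral_const_mul]
  calc ∫ k : ℝ, (1 + d * t) ^ ((j + 1) / 2) *
        (|k| ^ j * ‖Complex.ofReal (exp (-(d * k ^ 2 * t))) * v k‖)
      ≤ ∫ k : ℝ, (M * gaussianWeight j (d * t) k + (1 + |k|) * ‖v k‖) := by
        refine integral_mono_of_nonneg (.of_forall fun k => by positivity) (hW.add hv) ?_
        filter_upwards [hvM] with k hk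
        exact one_add_rpow_mul_norm_heat_le hdt hj0 hj1 hk
    _ = (∫ k, gaussianWeight j (d * t) k) * M + ∫ k : ℝ, (1 + |k|) * ‖v k‖ := by
        rw [integral_add hW hv, integral_const_mul, mul_comm M]
    _ ≤ √π * M + ∫ k : ℝ, (1 + |k|) * ‖v k‖ := by
        gcongr
        exact integral_gaussianWeight_le_sqrt_pi hdt hj0 (by linarith)

theorem one_add_rpow_mul_integral_heat_deriv_le (hdt : 0 ≤ d * t) (hj0 : 0 ≤ j) (hj1 : j ≤ 1)
    (hvM : ∀ᵐ k, ‖v k‖ ≤ M) (hv : Integrable fun k => (1 + |k|) * ‖v k‖)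
    (hv' : Integrable fun k => (1 + |k|) * ‖v' k‖) :
    (1 + d * t) ^ (j / 2) *
        ∫ k : ℝ, |k| ^ j *
          ‖Complex.ofReal (-(2 * d * k * t)) * Complex.ofReal (exp (-(d * k ^ 2 * t))) * v k
            + Complex.ofReal (exp (-(d * k ^ 2 * t))) * v' k‖ ≤
      2 * (2 * √π * M + ((∫ k : ℝ, (1 + |k|) * ‖v k‖) + ∫ k : ℝ, (1 + |k|) * ‖v' k‖)) := by
  obtain ⟨_, hM⟩ := hvM.exists
  replace hM : 0 ≤ M := (norm_nonneg _).trans hM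
  have hW1 := integrable_gaussianWeight hdt (by norm_num : -1 < (1 : ℝ))
  have hWj := integrable_gaussianWeight hdt (by linarith : -1 < j + 1)
  have hW : Integrable fun k =>
      M * (gaussianWeight 1 (d * t) k + gaussianWeight (j + 1) (d * t) k) :=
    (hW1.add hWj).const_mul M
  have hN : Integrable fun k => (1 + |k|) * ‖v k‖ + (1 + |k|) * ‖v' k‖ := hv.add hv'
  rw [← integral_const_mul]
  calc ∫ k : ℝ, (1 + d * t) ^ (j / 2) * (|k| ^ j *
          ‖Complex.ofReal (-(2 * d * k * t)) * Complex.ofReal (exp (-(d * k ^ 2 * t))) * v k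
            + Complex.ofReal (exp (-(d * k ^ 2 * t))) * v' k‖)
      ≤ ∫ k : ℝ, 2 * (M * (gaussianWeight 1 (d * t) k + gaussianWeight (j + 1) (d * t) k)
          + ((1 + |k|) * ‖v k‖ + (1 + |k|) * ‖v' k‖)) := by
        refine integral_mono_of_nonneg (.of_forall fun k => by positivity)
          ((hW.add hN).const_mul 2) ?_
        filter_upwards [hvM] with k hk
        exact one_add_rpow_half_mul_norm_heat_deriv_le hdt hj0 hj1 hk
    _ = 2 * (((∫ k, gaussianWeight 1 (d * t) k) + ∫ k, gaussianWeight (j + 1) (d * t) k) * M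
          + ((∫ k : ℝ, (1 + |k|) * ‖v k‖) + ∫ k : ℝ, (1 + |k|) * ‖v' k‖)) := by
        rw [integral_const_mul, integral_add hW hN, integral_add hv hv', integral_const_mul,
          integral_add hW1 hWj, mul_comm M]
    _ ≤ 2 * (2 * √π * M
          + ((∫ k : ℝ, (1 + |k|) * ‖v k‖) + ∫ k : ℝ, (1 + |k|) * ‖v' k‖)) := by
        rw [two_mul (√π)]
        gcongr
        · exact integral_gaussianWeight_le_sqrt_pi hdt zero_le_one one_le_two
        · exact integral_gaussianWeight_le_sqrt_pi hdt (by linarith) (by linarith)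

theorem one_add_rpow_le_mul_one_add_mul_rpow {s : ℝ} (hd : 0 < d) (ht : 0 ≤ t) (hs0 : 0 ≤ s)
    (hs1 : s ≤ 1) : (1 + t) ^ s ≤ (1 + d⁻¹) * (1 + d * t) ^ s := by
  have hd' : 0 < d⁻¹ := inv_pos.2 hd
  calc (1 + t) ^ s ≤ ((1 + d⁻¹) * (1 + d * t)) ^ s := by
        gcongr
        have hexpand : (1 + d⁻¹) * (1 + d * t) = 1 + t + (d * t + d⁻¹) := by field_simp; ring
        rw [hexpand]
        exact le_add_of_nonneg_right (by positivity)
    _ = (1 + d⁻¹) ^ s * (1 + d * t) ^ s := mul_rpow (by positivity) (by positivity)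
    _ ≤ (1 + d⁻¹) * (1 + d * t) ^ s := by
        gcongr
        exact rpow_le_self_of_one_le (by linarith) hs1

theorem le_mul_one_add_rpow_neg {s I B : ℝ} (hd : 0 < d) (ht : 0 ≤ t) (hs0 : 0 ≤ s) (hs1 : s ≤ 1)
    (hI : 0 ≤ I) (hB : (1 + d * t) ^ s * I ≤ B) : I ≤ (1 + d⁻¹) * B * (1 + t) ^ (-s) := by
  rw [rpow_neg (by positivity), ← div_eq_mul_inv, le_div_iff₀ (by positivity)]
  calc I * (1 + t) ^ s ≤ I * ((1 + d⁻¹) * (1 + d * t) ^ s) := by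
        gcongr
        exact one_add_rpow_le_mul_one_add_mul_rpow hd ht hs0 hs1
    _ = (1 + d⁻¹) * ((1 + d * t) ^ s * I) := by ring
    _ ≤ (1 + d⁻¹) * B := by gcongr

theorem HasWeakDeriv.ae_norm_le_integral_one_add_abs_mul_norm (hw : HasWeakDeriv v v')
    (hv : Integrable fun k => (1 + |k|) * ‖v k‖) (hv' : Integrable fun k => (1 + |k|) * ‖v' k‖) :
    ∀ᵐ k, ‖v k‖ ≤ ∫ k : ℝ, (1 + |k|) * ‖v' k‖ := by
  have hvi : Integrable v := hv.mono' hw.1.aestronglyMeasurable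
    (.of_forall fun k => norm_le_one_add_abs_mul_norm k (v k))
  have hvi' : Integrable v' := hv'.mono' hw.2.1.aestronglyMeasurable
    (.of_forall fun k => norm_le_one_add_abs_mul_norm k (v' k))
  filter_upwards [hw.ae_norm_le_integral_norm hvi hvi'] with k hk
  exact hk.trans (integral_mono hvi'.norm hv' fun k => norm_le_one_add_abs_mul_norm k (v' k))

end HeatSemigroup

theorem heat_semigroup_weighted_L1_estimate_general (d : ℝ) (hd : 0 < d) :
    ∃ C : ℝ, 1 ≤ C ∧
      ∀ v₀ v₀' : ℝ → ℂ, HasWeakDeriv v₀ v₀' →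
        Integrable (fun k => (1 + |k|) * ‖v₀ k‖) →
        Integrable (fun k => (1 + |k|) * ‖v₀' k‖) →
        ∀ t : ℝ, 0 ≤ t → ∀ (j : ℝ) (m : ℕ), 0 ≤ j → j ≤ 1 → m ≤ 1 →
          (∫ k : ℝ, |k| ^ j *
              ‖if m = 0 then Complex.ofReal (Real.exp (-(d * k ^ 2 * t))) * v₀ k
                else Complex.ofReal (-(2 * d * k * t)) *
                      Complex.ofReal (Real.exp (-(d * k ^ 2 * t))) * v₀ k
                    + Complex.ofReal (Real.exp (-(d * k ^ 2 * t))) * v₀' k‖) ≤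
            C * ((∫ k : ℝ, (1 + |k|) * ‖v₀ k‖) + ∫ k : ℝ, (1 + |k|) * ‖v₀' k‖) *
              (1 + t) ^ (-(1 + j - (m : ℝ)) / 2) := by
  have hC : 1 ≤ (1 + d⁻¹) * (2 + 4 * √π) :=
    one_le_mul_of_one_le_of_one_le (le_add_of_nonneg_right (by positivity))
      (by linarith [sqrt_nonneg π])
  refine ⟨(1 + d⁻¹) * (2 + 4 * √π), hC, fun v v' hw hv hv' t ht j m hj0 hj1 hm => ?_⟩
  have hdt : 0 ≤ d * t := by positivity
  have hsup := hw.ae_norm_le_integral_one_add_abs_mul_norm hv hv'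
  have hN : 0 ≤ ∫ k : ℝ, (1 + |k|) * ‖v k‖ := integral_nonneg fun k => by positivity
  have hN' : 0 ≤ ∫ k : ℝ, (1 + |k|) * ‖v' k‖ := integral_nonneg fun k => by positivity
  rw [mul_assoc (1 + d⁻¹), neg_div]
  refine le_mul_one_add_rpow_neg hd ht ?_ ?_ (integral_nonneg fun k => by positivity) ?_
  · interval_cases m <;> norm_num <;> linarith
  · interval_cases m <;> norm_num <;> linarith
  interval_cases m
  · have hbound := one_add_rpow_mul_integral_heat_le hdt hj0 hj1 hsup hv
    simp only [if_true, Nat.cast_zero, sub_zero, add_comm 1 j]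
    nlinarith [mul_nonneg (sqrt_nonneg π) hN, mul_nonneg (sqrt_nonneg π) hN']
  · have hbound := one_add_rpow_mul_integral_heat_deriv_le hdt hj0 hj1 hsup hv hv'
    simp only [one_ne_zero, if_false, Nat.cast_one, add_sub_cancel_left]
    nlinarith [mul_nonneg (sqrt_nonneg π) hN]

/-- heat-semigroup `L¹`-estimates in Fourier space with weight `(1+|k|)`:
for `j, m ∈ {0,1}`,
`∫ |k^j ∂_k^m (e^{-dk²t} v₀(k))| dk ≤ C ‖v₀‖_{W^{1,1}_1} (1+t)^{-(1+j-m)/2}`. -/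
theorem heat_semigroup_weighted_L1_estimate (d : ℝ) (hd : 0 < d) :
    ∃ C : ℝ, 1 ≤ C ∧
      ∀ v₀ v₀' : ℝ → ℂ, HasWeakDeriv v₀ v₀' →
        Integrable (fun k => (1 + |k|) * ‖v₀ k‖) →
        Integrable (fun k => (1 + |k|) * ‖v₀' k‖) →
        ∀ t : ℝ, 0 ≤ t → ∀ j m : ℕ, j ≤ 1 → m ≤ 1 →
          (∫ k : ℝ, |k| ^ j *
              ‖if m = 0 then Complex.ofReal (Real.exp (-(d * k ^ 2 * t))) * v₀ k
                else Complex.ofReal (-(2 * d * k * t)) *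
                      Complex.ofReal (Real.exp (-(d * k ^ 2 * t))) * v₀ k
                    + Complex.ofReal (Real.exp (-(d * k ^ 2 * t))) * v₀' k‖) ≤
            C * ((∫ k : ℝ, (1 + |k|) * ‖v₀ k‖) + ∫ k : ℝ, (1 + |k|) * ‖v₀' k‖) *
              (1 + t) ^ (-(1 + (j : ℝ) - (m : ℝ)) / 2) := by
  obtain ⟨C, hC, hbound⟩ := heat_semigroup_weighted_L1_estimate_general d hd
  exact ⟨C, hC, fun v₀ v₀' hw hv hv' t ht j m hj hm => by
    simpa only [rpow_natCast] using
      hbound v₀ v₀' hw hv hv' t ht j m j.cast_nonneg (mod_cast hj) hm⟩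
end
end

section
/- Let d > 0 and c ∈ ℝ. There exists a constant C ≥ 1, depending only on d and c, such that for every v₀ ∈ W^{1,1}_1(ℝ,ℂ), every t ≥ 0 and j ∈ {0,1}: ∫_ℝ (1+|k|) |∂_k^j ( e^{(−k² d + i c k) t} v₀(k) )| dk ≤ C (1+t) ‖v₀‖_{W^{1,1}_1}, where for j = 1 the derivative is taken in the weak sense. -/
open MeasureTheory Real

noncomputable section

/-- `e^{x + iy}` for real `x, y`. -/
def expc (x y : ℝ) : ℂ := Complex.exp (Complex.ofReal x + Complex.ofReal y * Complex.I)

lemma norm_expc (x y : ℝ) : ‖expc x y‖ = exp x := by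
  simp [expc, Complex.norm_exp]

lemma hasDerivAt_expc_comp {x y : ℝ → ℝ} {x' y' s : ℝ} (hx : HasDerivAt x x' s)
    (hy : HasDerivAt y y' s) :
    HasDerivAt (fun s => expc (x s) (y s)) ((x' + y' * Complex.I) * expc (x s) (y s)) s := by
  rw [mul_comm]
  exact (hx.ofReal_comp.add (hy.ofReal_comp.mul_const Complex.I)).cexp

/-- The Fourier symbol `k ↦ e^{(-k²d + ick)t}` of the advection-diffusion semigroup at time `t`,
with its exponent split into real and imaginary parts. -/
def advectionDiffusionSymbol (d c t k : ℝ) : ℂ :=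
  expc (-(k ^ 2 * d * t)) (c * k * t)

lemma norm_advectionDiffusionSymbol_le_one {d t : ℝ} (hd : 0 ≤ d) (ht : 0 ≤ t) (c k : ℝ) :
    ‖advectionDiffusionSymbol d c t k‖ ≤ 1 := by
  rw [advectionDiffusionSymbol, norm_expc, exp_le_one_iff, neg_nonpos]
  positivity

lemma deriv_advectionDiffusionSymbol (d c t k : ℝ) :
    deriv (advectionDiffusionSymbol d c t) k =
      (Complex.ofReal (-(2 * k * d * t)) + Complex.ofReal (c * t) * Complex.I) *
        advectionDiffusionSymbol d c t k := by
  have hre : HasDerivAt (fun k : ℝ => -(k ^ 2 * d * t)) (-(2 * k * d * t)) k := by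
    simpa using (((hasDerivAt_pow 2 k).mul_const d).mul_const t).fun_neg
  have him : HasDerivAt (fun k : ℝ => c * k * t) (c * t) k := by
    simpa using ((hasDerivAt_id k).const_mul c).mul_const t
  exact (hasDerivAt_expc_comp hre him).deriv

/-- Gaussian decay absorbs the linear growth in `k`: with `x = k²a`, the left side is at most
`(x + a) e^{-x}`. -/
lemma two_mul_abs_mul_exp_neg_sq_mul_le {a : ℝ} (ha : 0 ≤ a) (k : ℝ) :
    2 * |k| * a * exp (-(k ^ 2 * a)) ≤ 1 + a := by
  have hamgm : 2 * |k| ≤ 1 + k ^ 2 := by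
    simpa using two_mul_le_add_sq 1 |k|
  have hexp_le : exp (-(k ^ 2 * a)) ≤ 1 := exp_le_one_iff.mpr (neg_nonpos.mpr (by positivity))
  have hmul_exp_le : k ^ 2 * a * exp (-(k ^ 2 * a)) ≤ 1 :=
    (mul_exp_neg_le_exp_neg_one _).trans (exp_le_one_iff.mpr (by norm_num))
  calc 2 * |k| * a * exp (-(k ^ 2 * a))
      ≤ (1 + k ^ 2) * a * exp (-(k ^ 2 * a)) := by gcongr
    _ = k ^ 2 * a * exp (-(k ^ 2 * a)) + a * exp (-(k ^ 2 * a)) := by ring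
    _ ≤ 1 + a := add_le_add hmul_exp_le (mul_le_of_le_one_right ha hexp_le)

lemma norm_deriv_advectionDiffusionSymbol_le {d t : ℝ} (hd : 0 ≤ d) (ht : 0 ≤ t) (c k : ℝ) :
    ‖deriv (advectionDiffusionSymbol d c t) k‖ ≤ 1 + (d + |c|) * t := by
  have hfactor : ‖Complex.ofReal (-(2 * k * d * t)) + Complex.ofReal (c * t) * Complex.I‖ ≤
      2 * |k| * (d * t) + |c| * t := by
    refine (norm_add_le _ _).trans_eq ?_
    simp only [norm_mul, Complex.norm_real, Complex.norm_I, norm_neg, norm_eq_abs, abs_two,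
      abs_of_nonneg hd, abs_of_nonneg ht]
    ring
  calc ‖deriv (advectionDiffusionSymbol d c t) k‖
      ≤ (2 * |k| * (d * t) + |c| * t) * ‖advectionDiffusionSymbol d c t k‖ := by
        rw [deriv_advectionDiffusionSymbol, norm_mul]
        gcongr
    _ = 2 * |k| * (d * t) * exp (-(k ^ 2 * (d * t))) +
          |c| * t * ‖advectionDiffusionSymbol d c t k‖ := by
        rw [add_mul, ← mul_assoc (k ^ 2), advectionDiffusionSymbol, norm_expc]
    _ ≤ (1 + d * t) + |c| * t :=
        add_le_add (two_mul_abs_mul_exp_neg_sq_mul_le (by positivity) k)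
          (mul_le_of_le_one_right (by positivity) (norm_advectionDiffusionSymbol_le_one hd ht c k))
    _ = 1 + (d + |c|) * t := by ring

lemma integral_mul_norm_smul_add_smul_le {α R E : Type*} [MeasurableSpace α] {μ : Measure α}
    [SeminormedRing R] [SeminormedAddCommGroup E] [Module R E] [IsBoundedSMul R E]
    {w : α → ℝ} {a b : α → R} {f g : α → E} {K : ℝ} (hw : ∀ᵐ x ∂μ, 0 ≤ w x)
    (ha : ∀ᵐ x ∂μ, ‖a x‖ ≤ K) (hb : ∀ᵐ x ∂μ, ‖b x‖ ≤ K)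
    (hf : Integrable (fun x => w x * ‖f x‖) μ) (hg : Integrable (fun x => w x * ‖g x‖) μ) :
    ∫ x, w x * ‖a x • f x + b x • g x‖ ∂μ ≤
      K * ((∫ x, w x * ‖f x‖ ∂μ) + ∫ x, w x * ‖g x‖ ∂μ) := by
  rw [← integral_add hf hg, ← integral_const_mul]
  refine integral_mono_of_nonneg ?_ ((hf.add hg).const_mul K) ?_
  · filter_upwards [hw] with x hwx using mul_nonneg hwx (norm_nonneg _)
  filter_upwards [hw, ha, hb] with x hwx hax hbx
  calc w x * ‖a x • f x + b x • g x‖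
      ≤ w x * (K * ‖f x‖ + K * ‖g x‖) := by
        gcongr
        exact norm_add_le_of_le ((norm_smul_le _ _).trans (by gcongr))
          ((norm_smul_le _ _).trans (by gcongr))
    _ = K * (w x * ‖f x‖ + w x * ‖g x‖) := by ring

/-- for the advection-diffusion semigroup `e^{(-k²d + ick)t}` and `j ∈ {0,1}`,
`∫ (1+|k|) |∂_k^j (e^{(-k²d+ick)t} v₀(k))| dk ≤ C (1+t) ‖v₀‖_{W^{1,1}_1}`. -/
theorem advection_diffusion_semigroup_weighted_estimate (d c : ℝ) (hd : 0 < d) :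
    ∃ C : ℝ, 1 ≤ C ∧
      ∀ v₀ v₀' : ℝ → ℂ, HasWeakDeriv v₀ v₀' →
        Integrable (fun k => (1 + |k|) * ‖v₀ k‖) →
        Integrable (fun k => (1 + |k|) * ‖v₀' k‖) →
        ∀ t : ℝ, 0 ≤ t → ∀ j : ℕ, j ≤ 1 →
          (∫ k : ℝ, (1 + |k|) *
              ‖if j = 0 then expc (-(k ^ 2 * d * t)) (c * k * t) * v₀ k
                else (Complex.ofReal (-(2 * k * d * t)) + Complex.ofReal (c * t) * Complex.I) *
                      expc (-(k ^ 2 * d * t)) (c * k * t) * v₀ k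
                    + expc (-(k ^ 2 * d * t)) (c * k * t) * v₀' k‖) ≤
            C * (1 + t) * ((∫ k : ℝ, (1 + |k|) * ‖v₀ k‖) + ∫ k : ℝ, (1 + |k|) * ‖v₀' k‖) := by
  have hc : 0 ≤ |c| := abs_nonneg c
  refine ⟨1 + d + |c|, by linarith, fun v₀ v₀' _ hv₀ hv₀' t ht j _ => ?_⟩
  have hrate : 1 + (d + |c|) * t ≤ (1 + d + |c|) * (1 + t) := by linarith
  have hone : 1 ≤ (1 + d + |c|) * (1 + t) :=
    (le_add_of_nonneg_right (by positivity)).trans hrate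
  have hweight : ∀ᵐ k : ℝ, 0 ≤ 1 + |k| := .of_forall fun k => by positivity
  have hsymbol : ∀ᵐ k, ‖advectionDiffusionSymbol d c t k‖ ≤ (1 + d + |c|) * (1 + t) :=
    .of_forall fun k => (norm_advectionDiffusionSymbol_le_one hd.le ht c k).trans hone
  have hderiv : ∀ᵐ k, ‖deriv (advectionDiffusionSymbol d c t) k‖ ≤ (1 + d + |c|) * (1 + t) :=
    .of_forall fun k => (norm_deriv_advectionDiffusionSymbol_le hd.le ht c k).trans hrate
  have hzero : ∀ᵐ _ : ℝ, ‖(0 : ℂ)‖ ≤ (1 + d + |c|) * (1 + t) :=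
    .of_forall fun _ => norm_zero.trans_le (zero_le_one.trans hone)
  by_cases hj : j = 0
  · simpa only [if_pos hj, smul_eq_mul, zero_mul, add_zero, advectionDiffusionSymbol] using
      integral_mul_norm_smul_add_smul_le hweight hsymbol hzero hv₀ hv₀'
  · simpa only [if_neg hj, deriv_advectionDiffusionSymbol, smul_eq_mul,
      advectionDiffusionSymbol] using
      integral_mul_norm_smul_add_smul_le hweight hderiv hsymbol hv₀ hv₀'
end
end

section
/- Let α ∈ (0,1], d > 0, c ∈ ℝ and T₀ > 0. There exists a constant C ≥ 1, depending only on α, d, c and T₀, such that for every v₀ ∈ W^{1,1}_{1+α}(ℝ,ℂ), all 0 ≤ s ≤ t ≤ T₀ and j ∈ {0,1}: ∫_ℝ ∫_s^t (1+|k|) | ∂_k^j ( (−k² d + i c k) e^{(−k² d + i c k) r} v₀(k) ) | dr dk ≤ C ‖v₀‖_{W^{1,1}_{1+α}} ( t^{α/2} − s^{α/2} ), where for j = 1 the derivative is taken in the weak sense. -/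
open MeasureTheory Real

noncomputable section

/-- the symbol `-k²d + ick`. -/
def symb (d c k : ℝ) : ℂ := Complex.ofReal (-(k ^ 2 * d)) + Complex.ofReal (c * k) * Complex.I

/-!
Write `σ k = -k²d + ick`. Both `σ` and `σ'` are `O(1 + k²)`, and `|e^{rσ}| = e^{-dk²r}` is the
square of `e^{-dk²r/2}`. One of these two factors absorbs the `r (1 + k²)` that differentiating
`e^{rσ}` produces, so that `σ e^{rσ}` and its `k`-derivative are both `O((1 + k²) e^{-dk²r/2})`.
The other factor is traded for a time singularity: interpolating between `e^{-dk²r/2} ≤ 1` and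
`r (1 + k²) e^{-dk²r/2} = O(1)` gives `(1 + k²) e^{-dk²r/2} = O((1 + |k|)^α r^{α/2 - 1})` for
`α ≤ 2`, and `r^{α/2 - 1}` integrates to a multiple of `t^{α/2} - s^{α/2}`.
-/

section GaussianSmoothing

variable {a T r x : ℝ}

lemma exp_neg_mul_mul_le_one (ha : 0 ≤ a) (hr : 0 ≤ r) (hx : 0 ≤ x) :
    rexp (-(a * x * r)) ≤ 1 :=
  exp_le_one_iff.2 (neg_nonpos.2 (by positivity))

lemma one_add_mul_mul_exp_neg_le (ha : 0 < a) (hr : 0 ≤ r) (hrT : r ≤ T) (hx : 0 ≤ x) :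
    (1 + x) * r * rexp (-(a * x * r)) ≤ T + 1 / a := by
  have h_time : r * rexp (-(a * x * r)) ≤ T :=
    (mul_le_of_le_one_right hr (exp_neg_mul_mul_le_one ha.le hr hx)).trans hrT
  have h_space : x * r * rexp (-(a * x * r)) ≤ 1 / a := by
    rw [le_div_iff₀ ha]
    calc x * r * rexp (-(a * x * r)) * a = (a * x * r) * rexp (-(a * x * r)) := by ring
      _ ≤ rexp (-1) := mul_exp_neg_le_exp_neg_one _
      _ ≤ 1 := exp_le_one_iff.2 (by norm_num)
  linarith

lemma one_add_mul_exp_neg_le_rpow {θ : ℝ} (hθ : 0 ≤ θ) (hθ1 : θ ≤ 1) (ha : 0 < a)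
    (hr : 0 < r) (hrT : r ≤ T) (hx : 0 ≤ x) :
    (1 + x) * rexp (-(a * x * r)) ≤ (1 + T + 1 / a) * ((1 + x) ^ θ * r ^ (θ - 1)) := by
  have hy : 0 < (1 + x) * r := by positivity
  have h_bernoulli : ((1 + x) * r) ^ (1 - θ) ≤ 1 + (1 + x) * r := by
    have := rpow_one_add_le_one_add_mul_self (s := (1 + x) * r - 1) (by linarith)
      (sub_nonneg.2 hθ1) (sub_le_self 1 hθ)
    rw [add_sub_cancel] at this
    nlinarith
  have h_interp : ((1 + x) * r) ^ (1 - θ) * rexp (-(a * x * r)) ≤ 1 + T + 1 / a := by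
    calc ((1 + x) * r) ^ (1 - θ) * rexp (-(a * x * r))
        ≤ (1 + (1 + x) * r) * rexp (-(a * x * r)) := by gcongr
      _ = rexp (-(a * x * r)) + (1 + x) * r * rexp (-(a * x * r)) := by ring
      _ ≤ 1 + (T + 1 / a) := add_le_add (exp_neg_mul_mul_le_one ha.le hr.le hx)
          (one_add_mul_mul_exp_neg_le ha hr.le hrT hx)
      _ = 1 + T + 1 / a := by ring
  have h_split : ((1 + x) * r) ^ (1 - θ) * ((1 + x) ^ θ * r ^ (θ - 1)) = 1 + x := by
    rw [mul_rpow (by positivity) hr.le, mul_mul_mul_comm, ← rpow_add (by positivity),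
      ← rpow_add hr]
    simp
  calc (1 + x) * rexp (-(a * x * r))
      = ((1 + x) * r) ^ (1 - θ) * rexp (-(a * x * r)) * ((1 + x) ^ θ * r ^ (θ - 1)) := by
        rw [mul_right_comm (_ ^ (1 - θ)), h_split]
    _ ≤ (1 + T + 1 / a) * ((1 + x) ^ θ * r ^ (θ - 1)) := by gcongr

end GaussianSmoothing

lemma one_add_sq_rpow_half_le {α : ℝ} (hα : 0 ≤ α) (k : ℝ) :
    (1 + k ^ 2) ^ (α / 2) ≤ (1 + |k|) ^ α := by
  calc (1 + k ^ 2) ^ (α / 2) ≤ ((1 + |k|) ^ 2) ^ (α / 2) := by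
        gcongr
        nlinarith [sq_abs k, abs_nonneg k]
    _ = (1 + |k|) ^ α := by
        rw [← rpow_natCast_mul (by positivity)]
        congr 1
        push_cast
        ring

lemma intervalIntegral_le_of_le_mul_rpow {f : ℝ → ℝ} {s t θ K : ℝ} (hθ : 0 < θ) (hst : s ≤ t)
    (hf : IntervalIntegrable f volume s t) (hfK : ∀ r ∈ Set.Ioo s t, f r ≤ K * r ^ (θ - 1)) :
    ∫ r in s..t, f r ≤ K / θ * (t ^ θ - s ^ θ) := by
  have hθ1 : -1 < θ - 1 := by linarith
  calc ∫ r in s..t, f r ≤ ∫ r in s..t, K * r ^ (θ - 1) :=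
        intervalIntegral.integral_mono_on_of_le_Ioo hst hf
          ((intervalIntegral.intervalIntegrable_rpow' hθ1).const_mul K) hfK
    _ = K / θ * (t ^ θ - s ^ θ) := by
        rw [intervalIntegral.integral_const_mul, integral_rpow (Or.inl hθ1), sub_add_cancel]
        ring

section Symbol

variable (d c k : ℝ)

lemma symb_re : (symb d c k).re = -(k ^ 2 * d) := by
  simp [symb, -Complex.ofReal_pow]

lemma hasDerivAt_symb :
    HasDerivAt (symb d c) (Complex.ofReal (-(2 * k * d)) + Complex.ofReal c * Complex.I) k := by
  have h_re : HasDerivAt (fun x : ℝ => -(x ^ 2 * d)) (-(2 * k * d)) k := by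
    simpa using ((hasDerivAt_pow 2 k).mul_const d).fun_neg
  have h_im : HasDerivAt (fun x : ℝ => c * x) c k := by
    simpa using (hasDerivAt_id k).const_mul c
  exact h_re.ofReal_comp.add (h_im.ofReal_comp.mul_const Complex.I)

lemma deriv_symb :
    deriv (symb d c) k = Complex.ofReal (-(2 * k * d)) + Complex.ofReal c * Complex.I :=
  (hasDerivAt_symb d c k).deriv

lemma norm_ofReal_add_ofReal_mul_I_le (x y : ℝ) :
    ‖Complex.ofReal x + Complex.ofReal y * Complex.I‖ ≤ |x| + |y| :=
  (norm_add_le _ _).trans_eq (by simp)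

lemma norm_symb_le : ‖symb d c k‖ ≤ (|d| + |c|) * (1 + k ^ 2) := by
  have hk : |k| ≤ 1 + k ^ 2 := by nlinarith [sq_abs k, sq_nonneg (|k| - 1)]
  calc ‖symb d c k‖ ≤ |-(k ^ 2 * d)| + |c * k| := norm_ofReal_add_ofReal_mul_I_le _ _
    _ = |d| * k ^ 2 + |c| * |k| := by rw [abs_neg, abs_mul, abs_mul, abs_sq, mul_comm]
    _ ≤ |d| * (1 + k ^ 2) + |c| * (1 + k ^ 2) := by gcongr; linarith
    _ = (|d| + |c|) * (1 + k ^ 2) := by ring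

lemma norm_deriv_symb_le : ‖deriv (symb d c) k‖ ≤ (|d| + |c|) * (1 + k ^ 2) := by
  have hk : 2 * |k| ≤ 1 + k ^ 2 := by nlinarith [sq_abs k, sq_nonneg (|k| - 1)]
  calc ‖deriv (symb d c) k‖ ≤ |-(2 * k * d)| + |c| := by
        rw [deriv_symb]
        exact norm_ofReal_add_ofReal_mul_I_le _ _
    _ = |d| * (2 * |k|) + |c| * 1 := by
        rw [abs_neg, abs_mul, abs_mul, abs_two]
        ring
    _ ≤ |d| * (1 + k ^ 2) + |c| * (1 + k ^ 2) := by
        gcongr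
        linarith [sq_nonneg k]
    _ = (|d| + |c|) * (1 + k ^ 2) := by ring

end Symbol

/-- The multiplier `σ(k) e^{rσ(k)}`, `σ = symb d c`, by which the generator composed with the
semigroup at time `r` acts on the frequency side. -/
def generatorMultiplier (d c r k : ℝ) : ℂ := symb d c k * Complex.exp (r * symb d c k)

section Multiplier

variable {d T r : ℝ}

lemma exp_mul_symb (d c r k : ℝ) :
    Complex.exp (r * symb d c k) = expc (-(k ^ 2 * d * r)) (c * k * r) := by
  unfold expc symb
  push_cast
  ring_nf

lemma norm_exp_mul_symb (d c r k : ℝ) :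
    ‖Complex.exp (r * symb d c k)‖ = rexp (-(d / 2 * k ^ 2 * r)) ^ 2 := by
  rw [Complex.norm_exp, Complex.re_ofReal_mul, symb_re, ← exp_nat_mul]
  push_cast
  ring_nf

lemma deriv_generatorMultiplier (d c r k : ℝ) :
    deriv (generatorMultiplier d c r) k =
      (1 + r * symb d c k) * deriv (symb d c) k * Complex.exp (r * symb d c k) := by
  have h := (hasDerivAt_symb d c k).differentiableAt.hasDerivAt
  refine (h.mul (h.const_mul (r : ℂ)).cexp).deriv.trans ?_
  ring

lemma norm_generatorMultiplier_le (hd : 0 ≤ d) (hr : 0 ≤ r) (c k : ℝ) :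
    ‖generatorMultiplier d c r k‖ ≤
      (|d| + |c|) * ((1 + k ^ 2) * rexp (-(d / 2 * k ^ 2 * r))) := by
  have hE := exp_neg_mul_mul_le_one (div_nonneg hd zero_le_two) hr (sq_nonneg k)
  rw [generatorMultiplier, norm_mul, norm_exp_mul_symb, ← mul_assoc]
  gcongr
  · exact norm_symb_le d c k
  · exact pow_le_of_le_one (exp_nonneg _) hE two_ne_zero

lemma norm_deriv_generatorMultiplier_le (hd : 0 < d) (hr : 0 ≤ r) (hrT : r ≤ T) (c k : ℝ) :
    ‖deriv (generatorMultiplier d c r) k‖ ≤ (1 + (|d| + |c|) * (T + 2 / d)) * (|d| + |c|) *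
      ((1 + k ^ 2) * rexp (-(d / 2 * k ^ 2 * r))) := by
  have hE := exp_neg_mul_mul_le_one (half_pos hd).le hr (sq_nonneg k)
  have hD := one_add_mul_mul_exp_neg_le (half_pos hd) hr hrT (sq_nonneg k)
  rw [one_div_div] at hD
  have h_factor : ‖1 + r * symb d c k‖ ≤ 1 + r * ((|d| + |c|) * (1 + k ^ 2)) := by
    refine (norm_add_le _ _).trans ?_
    rw [norm_one, norm_mul, Complex.norm_of_nonneg hr]
    gcongr
    exact norm_symb_le d c k
  have h_absorb : ‖1 + r * symb d c k‖ * rexp (-(d / 2 * k ^ 2 * r)) ≤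
      1 + (|d| + |c|) * (T + 2 / d) := by
    calc ‖1 + r * symb d c k‖ * rexp (-(d / 2 * k ^ 2 * r))
        ≤ (1 + r * ((|d| + |c|) * (1 + k ^ 2))) * rexp (-(d / 2 * k ^ 2 * r)) := by gcongr
      _ = rexp (-(d / 2 * k ^ 2 * r)) +
            (|d| + |c|) * ((1 + k ^ 2) * r * rexp (-(d / 2 * k ^ 2 * r))) := by ring
      _ ≤ 1 + (|d| + |c|) * (T + 2 / d) := by gcongr
  calc ‖deriv (generatorMultiplier d c r) k‖
      = (‖1 + r * symb d c k‖ * rexp (-(d / 2 * k ^ 2 * r))) *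
          (‖deriv (symb d c) k‖ * rexp (-(d / 2 * k ^ 2 * r))) := by
        rw [deriv_generatorMultiplier, norm_mul, norm_mul, norm_exp_mul_symb]
        ring
    _ ≤ (1 + (|d| + |c|) * (T + 2 / d)) *
          (((|d| + |c|) * (1 + k ^ 2)) * rexp (-(d / 2 * k ^ 2 * r))) := by
        have := (mul_nonneg (norm_nonneg _) (exp_nonneg _)).trans h_absorb
        gcongr
        exact norm_deriv_symb_le d c k
    _ = _ := by ring

end Multiplier

/-- `∂_k^j (σ e^{rσ} v)` at `k` for `j ∈ {0, 1}`, with `σ = symb d c` and `v'` in the role of the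
weak derivative of `v`, so that `j = 1` is the product rule. Every `j ≠ 0` is read as `1`. -/
def generatorSemigroupDeriv (d c : ℝ) (v v' : ℝ → ℂ) (j : ℕ) (r k : ℝ) : ℂ :=
  if j = 0 then generatorMultiplier d c r k * v k
  else deriv (generatorMultiplier d c r) k * v k + generatorMultiplier d c r k * v' k

section GeneratorSemigroup

variable {d T r α s t : ℝ} {v v' : ℝ → ℂ}

lemma generatorSemigroupDeriv_eq (d c : ℝ) (v v' : ℝ → ℂ) (j : ℕ) (r k : ℝ) :
    generatorSemigroupDeriv d c v v' j r k =
      if j = 0 then symb d c k * expc (-(k ^ 2 * d * r)) (c * k * r) * v k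
      else (Complex.ofReal (-(2 * k * d)) + Complex.ofReal c * Complex.I) *
            expc (-(k ^ 2 * d * r)) (c * k * r) * v k
          + symb d c k *
              (Complex.ofReal (-(2 * k * d * r)) + Complex.ofReal (c * r) * Complex.I) *
              expc (-(k ^ 2 * d * r)) (c * k * r) * v k
          + symb d c k * expc (-(k ^ 2 * d * r)) (c * k * r) * v' k := by
  rw [generatorSemigroupDeriv, deriv_generatorMultiplier, deriv_symb, generatorMultiplier,
    exp_mul_symb]
  congr 1
  push_cast
  ring

lemma continuous_generatorMultiplier (d c : ℝ) :
    Continuous fun p : ℝ × ℝ => generatorMultiplier d c p.2 p.1 := by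
  unfold generatorMultiplier symb
  fun_prop

lemma continuous_deriv_generatorMultiplier (d c : ℝ) :
    Continuous fun p : ℝ × ℝ => deriv (generatorMultiplier d c p.2) p.1 := by
  simp only [deriv_generatorMultiplier, deriv_symb, symb]
  fun_prop

lemma continuous_generatorSemigroupDeriv (d c : ℝ) (v v' : ℝ → ℂ) (j : ℕ) (k : ℝ) :
    Continuous fun r => generatorSemigroupDeriv d c v v' j r k := by
  have h_mul := (continuous_generatorMultiplier d c).comp (Continuous.prodMk_right k)
  have h_deriv := (continuous_deriv_generatorMultiplier d c).comp (Continuous.prodMk_right k)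
  unfold generatorSemigroupDeriv
  split_ifs
  · exact h_mul.mul_const _
  · exact (h_deriv.mul_const _).add (h_mul.mul_const _)

lemma aestronglyMeasurable_generatorSemigroupDeriv {μ ν : Measure ℝ} [SFinite ν]
    (hv : AEStronglyMeasurable v μ) (hv' : AEStronglyMeasurable v' μ) (d c : ℝ) (j : ℕ) :
    AEStronglyMeasurable (fun p : ℝ × ℝ => generatorSemigroupDeriv d c v v' j p.2 p.1)
      (μ.prod ν) := by
  have h_mul := (continuous_generatorMultiplier d c).aestronglyMeasurable (μ := μ.prod ν)
  have h_deriv := (continuous_deriv_generatorMultiplier d c).aestronglyMeasurable (μ := μ.prod ν)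
  unfold generatorSemigroupDeriv
  split_ifs
  · exact h_mul.mul hv.comp_fst
  · exact (h_deriv.mul hv.comp_fst).add (h_mul.mul hv'.comp_fst)

lemma norm_generatorSemigroupDeriv_le (hd : 0 < d) (hr : 0 ≤ r) (hrT : r ≤ T) (c : ℝ)
    (v v' : ℝ → ℂ) (j : ℕ) (k : ℝ) :
    ‖generatorSemigroupDeriv d c v v' j r k‖ ≤ (1 + (|d| + |c|) * (T + 2 / d)) * (|d| + |c|) *
      ((1 + k ^ 2) * rexp (-(d / 2 * k ^ 2 * r))) * (‖v k‖ + ‖v' k‖) := by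
  have hT : 0 ≤ T := hr.trans hrT
  set B := (1 + (|d| + |c|) * (T + 2 / d)) * (|d| + |c|) *
    ((1 + k ^ 2) * rexp (-(d / 2 * k ^ 2 * r))) with hB
  have h_mul : ‖generatorMultiplier d c r k‖ ≤ B := by
    refine (norm_generatorMultiplier_le hd.le hr c k).trans ?_
    rw [hB]
    gcongr
    exact le_mul_of_one_le_left (by positivity) (le_add_of_nonneg_right (by positivity))
  have h_deriv : ‖deriv (generatorMultiplier d c r) k‖ ≤ B :=
    norm_deriv_generatorMultiplier_le hd hr hrT c k
  unfold generatorSemigroupDeriv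
  split_ifs
  · rw [norm_mul]
    gcongr
    exact le_add_of_nonneg_right (norm_nonneg _)
  · refine (norm_add_le _ _).trans ?_
    rw [norm_mul, norm_mul, mul_add]
    gcongr

/-- The constant in the pointwise bound of `generatorSemigroupDeriv` on the time interval `(0, T]`:
the bound of the multiplier and its derivative by `(1 + k²) e^{-dk²r/2}`, times the smoothing
constant of that Gaussian. -/
def smoothingConst (d c T : ℝ) : ℝ :=
  (1 + (|d| + |c|) * (T + 2 / d)) * (|d| + |c|) * (1 + T + 2 / d)

lemma one_add_abs_mul_norm_generatorSemigroupDeriv_le (hα : 0 ≤ α) (hα2 : α ≤ 2) (hd : 0 < d)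
    (hr : 0 < r) (hrT : r ≤ T) (c : ℝ) (v v' : ℝ → ℂ) (j : ℕ) (k : ℝ) :
    (1 + |k|) * ‖generatorSemigroupDeriv d c v v' j r k‖ ≤
      smoothingConst d c T * ((1 + |k|) ^ (1 + α) * ‖v k‖ + (1 + |k|) ^ (1 + α) * ‖v' k‖) *
        r ^ (α / 2 - 1) := by
  have hT : 0 < T := hr.trans_le hrT
  have h_smooth : (1 + k ^ 2) * rexp (-(d / 2 * k ^ 2 * r)) ≤
      (1 + T + 2 / d) * ((1 + |k|) ^ α * r ^ (α / 2 - 1)) := by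
    refine (one_add_mul_exp_neg_le_rpow (div_nonneg hα zero_le_two)
      ((div_le_one two_pos).2 hα2) (half_pos hd) hr hrT (sq_nonneg k)).trans ?_
    rw [one_div_div]
    gcongr
    exact one_add_sq_rpow_half_le hα k
  calc (1 + |k|) * ‖generatorSemigroupDeriv d c v v' j r k‖
      ≤ (1 + |k|) * ((1 + (|d| + |c|) * (T + 2 / d)) * (|d| + |c|) *
          ((1 + T + 2 / d) * ((1 + |k|) ^ α * r ^ (α / 2 - 1))) * (‖v k‖ + ‖v' k‖)) := by
        grw [norm_generatorSemigroupDeriv_le hd hr.le hrT, h_smooth]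
    _ = _ := by
        rw [smoothingConst, rpow_add (by positivity), rpow_one]
        ring

lemma intervalIntegral_generatorSemigroupDeriv_le (hα : 0 < α) (hα2 : α ≤ 2) (hd : 0 < d)
    (hs : 0 ≤ s) (hst : s ≤ t) (htT : t ≤ T) (c : ℝ) (v v' : ℝ → ℂ) (j : ℕ) (k : ℝ) :
    ∫ r in s..t, (1 + |k|) * ‖generatorSemigroupDeriv d c v v' j r k‖ ≤
      smoothingConst d c T / (α / 2) * (t ^ (α / 2) - s ^ (α / 2)) *
        ((1 + |k|) ^ (1 + α) * ‖v k‖ + (1 + |k|) ^ (1 + α) * ‖v' k‖) := by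
  have h_int : IntervalIntegrable (fun r => (1 + |k|) * ‖generatorSemigroupDeriv d c v v' j r k‖)
      volume s t :=
    ((continuous_generatorSemigroupDeriv d c v v' j k).norm.const_mul _).intervalIntegrable s t
  refine (intervalIntegral_le_of_le_mul_rpow (half_pos hα) hst h_int fun r hr =>
    one_add_abs_mul_norm_generatorSemigroupDeriv_le hα.le hα2 hd (hs.trans_lt hr.1)
      (hr.2.le.trans htT) c v v' j k).trans_eq ?_
  ring

lemma aestronglyMeasurable_intervalIntegral_generatorSemigroupDeriv {μ : Measure ℝ}
    (hv : AEStronglyMeasurable v μ) (hv' : AEStronglyMeasurable v' μ) (hst : s ≤ t) (d c : ℝ)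
    (j : ℕ) :
    AEStronglyMeasurable
      (fun k => ∫ r in s..t, (1 + |k|) * ‖generatorSemigroupDeriv d c v v' j r k‖) μ := by
  simp only [intervalIntegral.integral_of_le hst]
  have h_weight : Continuous fun p : ℝ × ℝ => 1 + |p.1| := by fun_prop
  exact (h_weight.aestronglyMeasurable.mul
    (aestronglyMeasurable_generatorSemigroupDeriv hv hv' d c j).norm).integral_prod_right'

end GeneratorSemigroup

theorem semigroup_holder_estimate_general {α : ℝ} (hα : 0 < α) (hα2 : α ≤ 2)
    {d : ℝ} (hd : 0 < d) (c T₀ : ℝ) :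
    ∃ C : ℝ, 1 ≤ C ∧
      ∀ v₀ v₀' : ℝ → ℂ, HasWeakDeriv v₀ v₀' →
        Integrable (fun k => (1 + |k|) ^ (1 + α) * ‖v₀ k‖) →
        Integrable (fun k => (1 + |k|) ^ (1 + α) * ‖v₀' k‖) →
        ∀ s t : ℝ, 0 ≤ s → s ≤ t → t ≤ T₀ →
          ∀ j : ℕ, j ≤ 1 →
            Integrable (fun k : ℝ => ∫ r in s..t,
              (1 + |k|) * ‖generatorSemigroupDeriv d c v₀ v₀' j r k‖) ∧
            (∫ k : ℝ, ∫ r in s..t, (1 + |k|) * ‖generatorSemigroupDeriv d c v₀ v₀' j r k‖) ≤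
              C * ((∫ k : ℝ, (1 + |k|) ^ (1 + α) * ‖v₀ k‖)
                    + ∫ k : ℝ, (1 + |k|) ^ (1 + α) * ‖v₀' k‖) *
                (t ^ (α / 2) - s ^ (α / 2)) := by
  refine ⟨max 1 (smoothingConst d c T₀ / (α / 2)), le_max_left _ _, ?_⟩
  intro v₀ v₀' h_weak hv hv' s t hs hst ht j _
  have h_bound := intervalIntegral_generatorSemigroupDeriv_le hα hα2 hd hs hst ht c v₀ v₀' j
  have h_dom := (hv.add hv').const_mul
    (smoothingConst d c T₀ / (α / 2) * (t ^ (α / 2) - s ^ (α / 2)))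
  have h_nonneg (k : ℝ) : 0 ≤ ∫ r in s..t, (1 + |k|) * ‖generatorSemigroupDeriv d c v₀ v₀' j r k‖ :=
    intervalIntegral.integral_nonneg hst fun r _ => by positivity
  have h_int := h_dom.mono' (aestronglyMeasurable_intervalIntegral_generatorSemigroupDeriv
    h_weak.1.aestronglyMeasurable h_weak.2.1.aestronglyMeasurable hst d c j)
    (ae_of_all _ fun k => (norm_of_nonneg (h_nonneg k)).trans_le (h_bound k))
  have h_time : 0 ≤ t ^ (α / 2) - s ^ (α / 2) :=
    sub_nonneg.2 (rpow_le_rpow hs hst (by positivity))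
  refine ⟨h_int, (integral_mono h_int h_dom h_bound).trans ?_⟩
  simp only [Pi.add_apply]
  rw [integral_const_mul, integral_add hv hv', mul_right_comm]
  gcongr
  exact le_max_right _ _

/-- Hölder-in-time estimate for the generator applied to the semigroup:
for `j ∈ {0,1}` and `0 ≤ s ≤ t ≤ T₀`,
`∫_ℝ ∫_s^t (1+|k|) |∂_k^j ((-k²d+ick) e^{(-k²d+ick)r} v₀(k))| dr dk
  ≤ C ‖v₀‖_{W^{1,1}_{1+α}} (t^{α/2} - s^{α/2})`. -/
theorem semigroup_holder_estimate (α : ℝ) (hα : 0 < α) (hα1 : α ≤ 1)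
    (d c : ℝ) (hd : 0 < d) (T₀ : ℝ) (hT₀ : 0 < T₀) :
    ∃ C : ℝ, 1 ≤ C ∧
      ∀ v₀ v₀' : ℝ → ℂ, HasWeakDeriv v₀ v₀' →
        Integrable (fun k => (1 + |k|) ^ (1 + α) * ‖v₀ k‖) →
        Integrable (fun k => (1 + |k|) ^ (1 + α) * ‖v₀' k‖) →
        ∀ s t : ℝ, 0 ≤ s → s ≤ t → t ≤ T₀ →
          ∀ j : ℕ, j ≤ 1 →
            (∫ k : ℝ, ∫ r in s..t, (1 + |k|) *
                ‖if j = 0 then symb d c k * expc (-(k ^ 2 * d * r)) (c * k * r) * v₀ k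
                  else (Complex.ofReal (-(2 * k * d)) + Complex.ofReal c * Complex.I) *
                        expc (-(k ^ 2 * d * r)) (c * k * r) * v₀ k
                      + symb d c k *
                          (Complex.ofReal (-(2 * k * d * r)) + Complex.ofReal (c * r) * Complex.I) *
                          expc (-(k ^ 2 * d * r)) (c * k * r) * v₀ k
                      + symb d c k * expc (-(k ^ 2 * d * r)) (c * k * r) * v₀' k‖) ≤
              C * ((∫ k : ℝ, (1 + |k|) ^ (1 + α) * ‖v₀ k‖)
                    + ∫ k : ℝ, (1 + |k|) ^ (1 + α) * ‖v₀' k‖) *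
                (t ^ (α / 2) - s ^ (α / 2)) := by
  obtain ⟨C, hC, h⟩ := semigroup_holder_estimate_general hα (hα1.trans one_le_two) hd c T₀
  exact ⟨C, hC, fun v₀ v₀' hw hv hv' s t hs hst ht j hj => by
    simpa only [generatorSemigroupDeriv_eq] using (h v₀ v₀' hw hv hv' s t hs hst ht j hj).2⟩
end
end

section
/- Let a ∈ [0,1) and b ≥ 0 with a + b ≥ 1 and b ≠ 1. Then there exists a constant C ≥ 1, depending only on a and b, such that for all t > 0: ∫_0^t (t−s)^{−a} (1+s)^{−b} ds ≤ C (1+t)^{−min(a, a+b−1)}. -/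
open MeasureTheory Real

noncomputable section

/-!
On `[0, t]` at least one factor of the integrand is comparable to its value at an endpoint:
`t - s ≈ t` when `s ≤ t / 2`, and `1 + s ≈ 1 + t` when `t / 2 ≤ s`. The integrand is therefore at
most a constant times `t ^ (-a) * (1 + s) ^ (-b) + (1 + t) ^ (-b) * (t - s) ^ (-a)`. After
integration both terms carry a factor `t ^ (1 - a) ≤ (1 + t) ^ (1 - a)`, because for `b ≠ 1` the
mean of `(1 + s) ^ (-b)` over `[0, t]` is at most a constant times `(1 + t) ^ (max (1 - b) 0 - 1)`.
-/

lemma rpow_le_rpow_abs_mul_rpow {r x y : ℝ} (p : ℝ) (hx : 0 < x) (hy : 0 < y)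
    (hxy : x ≤ r * y) (hyx : y ≤ r * x) : x ^ p ≤ r ^ |p| * y ^ p := by
  have hr : 0 < r := pos_of_mul_pos_left (hx.trans_le hxy) hy.le
  rcases le_total 0 p with hp | hp
  · rw [abs_of_nonneg hp, ← mul_rpow hr.le hy.le]
    exact rpow_le_rpow hx.le hxy hp
  · rw [abs_of_nonpos hp, rpow_neg hr.le, ← inv_rpow hr.le, ← mul_rpow (by positivity) hy.le]
    exact rpow_le_rpow_of_nonpos (by positivity) ((inv_mul_le_iff₀ hr).2 hyx) hp

lemma one_sub_rpow_le_max_one_mul {y : ℝ} (p : ℝ) (hy0 : 0 < y) (hy1 : y ≤ 1) :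
    1 - y ^ p ≤ max 1 p * (1 - y) := by
  rcases le_total p 1 with hp | hp
  · have hpow : y ≤ y ^ p := by simpa using rpow_le_rpow_of_exponent_ge hy0 hy1 hp
    rw [max_eq_left hp]
    linarith
  · have bernoulli : 1 + p * (y - 1) ≤ (1 + (y - 1)) ^ p :=
      one_add_mul_self_le_rpow_one_add (by linarith) hp
    rw [add_sub_cancel] at bernoulli
    rw [max_eq_right hp]
    linarith

lemma rpow_sub_one_div_eq {x u : ℝ} (hx : 0 < x) :
    (x ^ u - 1) / u = |u|⁻¹ * (x ^ max u 0 * (1 - x⁻¹ ^ |u|)) := by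
  rw [inv_rpow hx.le, ← rpow_neg hx.le, mul_one_sub, ← rpow_add hx]
  rcases le_total 0 u with hu | hu
  · rw [abs_of_nonneg hu, max_eq_left hu, add_neg_cancel, rpow_zero, div_eq_inv_mul]
  · rw [abs_of_nonpos hu, max_eq_right hu, neg_neg, zero_add, rpow_zero, inv_neg]
    ring

lemma rpow_sub_one_div_le {x u : ℝ} (hx : 1 ≤ x) (hu : u ≠ 0) :
    (x ^ u - 1) / u ≤ max 1 |u|⁻¹ * ((x - 1) * x ^ (max u 0 - 1)) := by
  have hx0 : 0 < x := one_pos.trans_le hx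
  calc (x ^ u - 1) / u = |u|⁻¹ * (x ^ max u 0 * (1 - x⁻¹ ^ |u|)) := rpow_sub_one_div_eq hx0
    _ ≤ |u|⁻¹ * (x ^ max u 0 * (max 1 |u| * (1 - x⁻¹))) := by
        gcongr
        exact one_sub_rpow_le_max_one_mul |u| (inv_pos.2 hx0) (inv_le_one_of_one_le₀ hx)
    _ = |u|⁻¹ * max 1 |u| * ((x - 1) * x ^ (max u 0 - 1)) := by
        rw [rpow_sub_one hx0.ne']
        field_simp
    _ = max 1 |u|⁻¹ * ((x - 1) * x ^ (max u 0 - 1)) := by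
        rw [mul_max_of_nonneg _ _ (by positivity), mul_one,
          inv_mul_cancel₀ (abs_ne_zero.2 hu), max_comm]

lemma continuousOn_one_add_rpow (q t : ℝ) :
    ContinuousOn (fun s : ℝ => (1 + s) ^ q) (Set.Icc 0 t) :=
  (continuousOn_const.add continuousOn_id).rpow_const fun _ hs =>
    Or.inl (add_pos_of_pos_of_nonneg one_pos hs.1).ne'

lemma integral_one_add_rpow {q t : ℝ} (hq : q ≠ -1) (ht : 0 ≤ t) :
    ∫ s in (0 : ℝ)..t, (1 + s) ^ q = ((1 + t) ^ (q + 1) - 1) / (q + 1) := by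
  have h0 : (0 : ℝ) ∉ Set.uIcc 1 (1 + t) := Set.notMem_uIcc_of_lt one_pos (by linarith)
  rw [intervalIntegral.integral_comp_add_left (fun x : ℝ => x ^ q) 1, add_zero,
    integral_rpow (Or.inr ⟨hq, h0⟩), one_rpow]

lemma integral_one_add_rpow_le {q t : ℝ} (hq : q ≠ -1) (ht : 0 ≤ t) :
    ∫ s in (0 : ℝ)..t, (1 + s) ^ q ≤
      max 1 |q + 1|⁻¹ * (t * (1 + t) ^ (max (q + 1) 0 - 1)) := by
  have hu : q + 1 ≠ 0 := fun h => hq (eq_neg_of_add_eq_zero_left h)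
  rw [integral_one_add_rpow hq ht]
  simpa using rpow_sub_one_div_le (le_add_of_nonneg_right ht : 1 ≤ 1 + t) hu

lemma intervalIntegrable_sub_rpow {p : ℝ} (hp : -1 < p) (t x y : ℝ) :
    IntervalIntegrable (fun s : ℝ => (t - s) ^ p) volume x y := by
  have h := intervalIntegral.intervalIntegrable_rpow' (a := t - x) (b := t - y) hp
  simpa using h.comp_sub_left t

lemma integral_sub_rpow {p : ℝ} (hp : -1 < p) (t : ℝ) :
    ∫ s in (0 : ℝ)..t, (t - s) ^ p = t ^ (p + 1) / (p + 1) := by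
  rw [intervalIntegral.integral_comp_sub_left (fun x : ℝ => x ^ p) t, sub_self, sub_zero,
    integral_rpow (Or.inl hp), zero_rpow (by linarith), sub_zero]

lemma sub_rpow_mul_one_add_rpow_le (p q : ℝ) {s t : ℝ} (ht : 0 < t) (hs : s ∈ Set.Icc 0 t) :
    (t - s) ^ p * (1 + s) ^ q ≤
      2 ^ |p| * t ^ p * (1 + s) ^ q + 2 ^ |q| * (1 + t) ^ q * (t - s) ^ p := by
  obtain ⟨hs0, hst⟩ := hs
  have hP : 0 ≤ (t - s) ^ p := rpow_nonneg (sub_nonneg.2 hst) p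
  rcases le_total s (t / 2) with hhalf | hhalf
  · have hcomp : (t - s) ^ p ≤ 2 ^ |p| * t ^ p :=
      rpow_le_rpow_abs_mul_rpow p (by linarith) ht (by linarith) (by linarith)
    exact (mul_le_mul_of_nonneg_right hcomp (by positivity)).trans
      (le_add_of_nonneg_right (by positivity))
  · have hcomp : (1 + s) ^ q ≤ 2 ^ |q| * (1 + t) ^ q :=
      rpow_le_rpow_abs_mul_rpow q (by linarith) (by linarith) (by linarith) (by linarith)
    rw [mul_comm]
    exact (mul_le_mul_of_nonneg_right hcomp hP).trans (le_add_of_nonneg_left (by positivity))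

lemma integral_sub_rpow_mul_one_add_rpow_le_add {p t : ℝ} (q : ℝ) (hp : -1 < p) (ht : 0 < t) :
    ∫ s in (0 : ℝ)..t, (t - s) ^ p * (1 + s) ^ q ≤
      2 ^ |p| * t ^ p * (∫ s in (0 : ℝ)..t, (1 + s) ^ q) +
        2 ^ |q| * (1 + t) ^ q * ∫ s in (0 : ℝ)..t, (t - s) ^ p := by
  have hP := intervalIntegrable_sub_rpow hp t 0 t
  have hcont := continuousOn_one_add_rpow q t
  have hQ := hcont.intervalIntegrable_of_Icc (μ := volume) ht.le
  rw [← Set.uIcc_of_le ht.le] at hcont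
  rw [← intervalIntegral.integral_const_mul, ← intervalIntegral.integral_const_mul,
    ← intervalIntegral.integral_add (hQ.const_mul _) (hP.const_mul _)]
  exact intervalIntegral.integral_mono_on ht.le (hP.mul_continuousOn hcont)
    ((hQ.const_mul _).add (hP.const_mul _)) fun s hs => sub_rpow_mul_one_add_rpow_le p q ht hs

lemma integral_sub_rpow_mul_one_add_rpow_le {p q t : ℝ} (hp : -1 < p) (hq : q ≠ -1)
    (ht : 0 < t) :
    ∫ s in (0 : ℝ)..t, (t - s) ^ p * (1 + s) ^ q ≤
      (2 ^ |p| * max 1 |q + 1|⁻¹ + 2 ^ |q| / (p + 1)) * (1 + t) ^ (p + max (q + 1) 0) := by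
  have hp1 : 0 < p + 1 := by linarith
  have h1t : 0 < 1 + t := by linarith
  have hpow : t ^ (p + 1) ≤ (1 + t) ^ (p + 1) := rpow_le_rpow ht.le (by linarith) hp1.le
  have hexp : (1 + t) ^ (p + 1 + q) ≤ (1 + t) ^ (p + max (q + 1) 0) :=
    rpow_le_rpow_of_exponent_le (by linarith) (by linarith [le_max_left (q + 1) 0])
  calc ∫ s in (0 : ℝ)..t, (t - s) ^ p * (1 + s) ^ q
    _ ≤ 2 ^ |p| * t ^ p * (∫ s in (0 : ℝ)..t, (1 + s) ^ q) +
          2 ^ |q| * (1 + t) ^ q * ∫ s in (0 : ℝ)..t, (t - s) ^ p :=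
        integral_sub_rpow_mul_one_add_rpow_le_add q hp ht
    _ ≤ 2 ^ |p| * t ^ p * (max 1 |q + 1|⁻¹ * (t * (1 + t) ^ (max (q + 1) 0 - 1))) +
          2 ^ |q| * (1 + t) ^ q * (t ^ (p + 1) / (p + 1)) := by
        rw [integral_sub_rpow hp]
        gcongr
        exact integral_one_add_rpow_le hq ht.le
    _ = 2 ^ |p| * max 1 |q + 1|⁻¹ * (t ^ (p + 1) * (1 + t) ^ (max (q + 1) 0 - 1)) +
          2 ^ |q| / (p + 1) * (t ^ (p + 1) * (1 + t) ^ q) := by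
        rw [rpow_add_one ht.ne']
        ring
    _ ≤ 2 ^ |p| * max 1 |q + 1|⁻¹ * ((1 + t) ^ (p + 1) * (1 + t) ^ (max (q + 1) 0 - 1)) +
          2 ^ |q| / (p + 1) * ((1 + t) ^ (p + 1) * (1 + t) ^ q) := by
        gcongr
    _ = 2 ^ |p| * max 1 |q + 1|⁻¹ * (1 + t) ^ (p + max (q + 1) 0) +
          2 ^ |q| / (p + 1) * (1 + t) ^ (p + 1 + q) := by
        rw [← rpow_add h1t, ← rpow_add h1t, add_add_sub_cancel]
    _ ≤ (2 ^ |p| * max 1 |q + 1|⁻¹ + 2 ^ |q| / (p + 1)) * (1 + t) ^ (p + max (q + 1) 0) := by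
        rw [add_mul]
        gcongr

theorem singular_temporal_convolution_estimate_general (a b : ℝ) (ha1 : a < 1) (hb1 : b ≠ 1) :
    ∃ C : ℝ, 1 ≤ C ∧
      ∀ t : ℝ, 0 < t →
        (∫ s in (0 : ℝ)..t, (t - s) ^ (-a) * (1 + s) ^ (-b)) ≤
          C * (1 + t) ^ (-min a (a + b - 1)) := by
  have hexp : -a + max (-b + 1) 0 = -min a (a + b - 1) := by
    rw [← max_neg_neg, max_comm, ← max_add_add_left]
    ring_nf
  have hC : 1 ≤ 2 ^ |-a| * max 1 |-b + 1|⁻¹ :=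
    one_le_mul_of_one_le_of_one_le (one_le_rpow one_le_two (abs_nonneg _)) (le_max_left _ _)
  have hC' : 0 ≤ 2 ^ |-b| / (-a + 1) := div_nonneg (by positivity) (by linarith)
  refine ⟨_, hC.trans (le_add_of_nonneg_right hC'), fun t ht => ?_⟩
  rw [← hexp]
  exact integral_sub_rpow_mul_one_add_rpow_le (neg_lt_neg ha1) (neg_injective.ne hb1) ht

/-- the standard convolution-type integral estimate
`∫_0^t (t-s)^{-a} (1+s)^{-b} ds ≤ C (1+t)^{-min(a, a+b-1)}`
for `a ∈ [0,1)`, `b ≥ 0` with `a + b ≥ 1` and `b ≠ 1`. -/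
theorem singular_temporal_convolution_estimate (a b : ℝ)
    (ha0 : 0 ≤ a) (ha1 : a < 1) (hb0 : 0 ≤ b) (hab : 1 ≤ a + b) (hb1 : b ≠ 1) :
    ∃ C : ℝ, 1 ≤ C ∧
      ∀ t : ℝ, 0 < t →
        (∫ s in (0 : ℝ)..t, (t - s) ^ (-a) * (1 + s) ^ (-b)) ≤
          C * (1 + t) ^ (-min a (a + b - 1)) :=
  singular_temporal_convolution_estimate_general a b ha1 hb1
end
end
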